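/- arXiv:2603.10982 — 4 statements merged into one kernel-verified Lean document; each statement's English description precedes it below -/
import Mathlib

section
/- Let R : Multiset α, S : Multiset β, T : Multiset γ with key maps f₁ : α → κ₁, g₁ : β → κ₁, f₂ : α → κ₂, g₂ : γ → κ₂ (a star-shaped join tree with root R and children S and T). Then the two-step bag join ((R ⋈_{f₁,g₁} S) ⋈_{f₂ ∘ Prod.fst, g₂} T) equals the multiset obtained by nested-semijoin-then-flatten evaluation: (R.filter (fun a => (∃ b ∈ S, g₁ b = f₁ a) ∧ (∃ c ∈ T, g₂ c = f₂ a))).bind (fun a => ((S.filter (fun b => g₁ b = f₁ a)) ×ˢ (T.filter (fun c => g₂ c = f₂ a))).map (fun bc => ((a, bc.1), bc.2))). -/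
attribute [local instance] Multiset.decidableExistsMultiset

variable {α β γ κ₁ κ₂ : Type*}

/-- The bag (multiset) join of `R` and `S` along key maps `f` and `g`: each tuple `a ∈ R`
is paired with each of its join partners `b ∈ S` (those with `g b = f a`). -/
def bagJoin [DecidableEq κ₁] (R : Multiset α) (S : Multiset β) (f : α → κ₁) (g : β → κ₁) :
    Multiset (α × β) :=
  R.bind (fun a => (S.filter (fun b => g b = f a)).map (fun b => (a, b)))

/-- Star join tree with root `R` and children `S`, `T`: the two-step bag join equals the
result of nested-semijoin-then-flatten evaluation, which keeps the tuples `a ∈ R` having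
partners in both `S` and `T` and pairs each such `a` with every combination of a partner
from `S` and a partner from `T`. -/
theorem bagJoin_star_nested_semijoin [DecidableEq κ₁] [DecidableEq κ₂]
    (R : Multiset α) (S : Multiset β) (T : Multiset γ)
    (f₁ : α → κ₁) (g₁ : β → κ₁) (f₂ : α → κ₂) (g₂ : γ → κ₂) :
    bagJoin (bagJoin R S f₁ g₁) T (f₂ ∘ Prod.fst) g₂ =
      (R.filter (fun a => (∃ b ∈ S, g₁ b = f₁ a) ∧ (∃ c ∈ T, g₂ c = f₂ a))).bind
        (fun a =>
          ((S.filter (fun b => g₁ b = f₁ a)) ×ˢ (T.filter (fun c => g₂ c = f₂ a))).map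
            (fun bc => ((a, bc.1), bc.2))) := by
  induction R using Multiset.induction_on with
  | empty => simp [bagJoin]
  | cons a R ih =>
    have hL : bagJoin (bagJoin (a ::ₘ R) S f₁ g₁) T (f₂ ∘ Prod.fst) g₂ =
        ((S.filter (fun b => g₁ b = f₁ a)) ×ˢ (T.filter (fun c => g₂ c = f₂ a))).map
            (fun bc => ((a, bc.1), bc.2)) +
          bagJoin (bagJoin R S f₁ g₁) T (f₂ ∘ Prod.fst) g₂ := by
      simp only [bagJoin, Multiset.cons_bind, Multiset.add_bind, Multiset.bind_map]
      congr 1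
      change _ = Multiset.map _ (Multiset.bind _ _)
      rw [Multiset.map_bind]
      simp [Multiset.map_map, Function.comp_def]
    rw [hL, ih]
    by_cases h : (∃ b ∈ S, g₁ b = f₁ a) ∧ (∃ c ∈ T, g₂ c = f₂ a)
    · rw [Multiset.filter_cons_of_pos (p := fun a => (∃ b ∈ S, g₁ b = f₁ a) ∧ (∃ c ∈ T, g₂ c = f₂ a)) _ h,
        Multiset.cons_bind]
    · rw [Multiset.filter_cons_of_neg (p := fun a => (∃ b ∈ S, g₁ b = f₁ a) ∧ (∃ c ∈ T, g₂ c = f₂ a)) _ h]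
      by_cases h1 : ∃ b ∈ S, g₁ b = f₁ a
      · have h2 : T.filter (fun c => g₂ c = f₂ a) = 0 :=
          Multiset.filter_eq_nil.2 fun c hc e => h ⟨h1, c, hc, e⟩
        rw [h2]
        simp
      · have h2 : S.filter (fun b => g₁ b = f₁ a) = 0 :=
          Multiset.filter_eq_nil.2 fun b hb e => h1 ⟨b, hb, e⟩
        rw [h2]
        simp
end

section
/- Let R : Multiset α, S : Multiset β, T : Multiset γ with key maps f : α → κ₁, g : β → κ₁, g' : β → κ₂, h : γ → κ₂ (a chain-shaped join tree R — S — T). Then the two-step bag join ((R ⋈_{f,g} S) ⋈_{g' ∘ Prod.snd, h} T) equals the multiset obtained by bottom-up nested-semijoin-then-flatten evaluation: letting S' = S.filter (fun b => ∃ c ∈ T, h c = g' b), it equals R.bind (fun a => (S'.filter (fun b => g b = f a)).bind (fun b => (T.filter (fun c => h c = g' b)).map (fun c => ((a, b), c)))). -/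
attribute [local instance] Multiset.decidableExistsMultiset

variable {α β γ κ₁ κ₂ : Type*}

/-- Chain join tree `R — S — T`: the two-step bag join equals the result of bottom-up
nested-semijoin-then-flatten evaluation, where first the tuples of `S` having no partner
in `T` are removed (yielding `S'`), and then each `a ∈ R` is paired with every `b ∈ S'`
joining it and every `c ∈ T` joining that `b`. -/
theorem bagJoin_chain_nested_semijoin [DecidableEq κ₁] [DecidableEq κ₂]
    (R : Multiset α) (S : Multiset β) (T : Multiset γ)
    (f : α → κ₁) (g : β → κ₁) (g' : β → κ₂) (h : γ → κ₂) :
    bagJoin (bagJoin R S f g) T (g' ∘ Prod.snd) h =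
      R.bind (fun a =>
        (((S.filter (fun b => ∃ c ∈ T, h c = g' b)).filter (fun b => g b = f a)).bind
          (fun b => (T.filter (fun c => h c = g' b)).map (fun c => ((a, b), c))))) := by
  unfold bagJoin
  rw [Multiset.bind_assoc]
  refine Multiset.bind_congr fun a _ => ?_
  rw [Multiset.bind_map]
  induction S using Multiset.induction_on with
  | empty => simp
  | cons b S ih =>
    by_cases hg : g b = f a
    · by_cases hT : ∃ c ∈ T, h c = g' b
      · rw [Multiset.filter_cons_of_pos (p := fun b => ∃ c ∈ T, h c = g' b) S hT,
          Multiset.filter_cons_of_pos (p := fun b => g b = f a) _ hg,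
          Multiset.filter_cons_of_pos (p := fun b => g b = f a) _ hg,
          Multiset.cons_bind, Multiset.cons_bind, ih]
        rfl
      · rw [Multiset.filter_cons_of_neg (p := fun b => ∃ c ∈ T, h c = g' b) S hT,
          Multiset.filter_cons_of_pos (p := fun b => g b = f a) _ hg,
          Multiset.cons_bind, ih]
        have h0 : T.filter (fun c => h c = g' b) = 0 :=
          Multiset.filter_eq_nil.2 fun c hc e => hT ⟨c, hc, e⟩
        simp [h0]
    · rw [Multiset.filter_cons_of_neg (p := fun b => g b = f a) _ hg, ih,
        Multiset.filter_comm, Multiset.filter_comm _ _ (b ::ₘ S),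
        Multiset.filter_cons_of_neg (p := fun b => g b = f a) _ hg]
end

section
/- Let L : List κ be a list of keys, with κ having decidable equality. For an index i < L.length define pred i to be the largest index j < i with L.get j = L.get i, if such an index exists (and 'none' otherwise). Fix a key k occurring in L and let i₀ be the largest index with L.get i₀ = k. Then the finite chain i₀, pred i₀, pred (pred i₀), … (stopping when pred is undefined) is strictly decreasing and visits exactly the set of all indices i with L.get i = k. -/
variable {κ : Type*}

/-- `c` is the pred-chain of `L` starting at `i₀`: its head is `i₀`, each element is
followed by the largest smaller index holding the same key of `L` (this is the
`pred` function realized by the `nxt` pointers), and `pred` is undefined at the last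
element (no smaller index has the same key). -/
def IsPredChain [DecidableEq κ] (L : List κ) (i₀ : ℕ) (c : List ℕ) : Prop :=
  c.head? = some i₀ ∧
  c.Chain' (fun i j => j < i ∧ L[j]? = L[i]? ∧ ∀ j', j < j' → j' < i → L[j']? ≠ L[i]?) ∧
  ∀ ℓ, c.getLast? = some ℓ → ∀ j < ℓ, L[j]? ≠ L[ℓ]?

theorem predChain_exists_aux [DecidableEq κ] (L : List κ) (n : ℕ) :
    ∃ c : List ℕ, IsPredChain L n c := by
  induction n using Nat.strong_induction_on with
  | _ n ih =>
    by_cases h : ∃ j, j < n ∧ L[j]? = L[n]?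
    · have hg : ∃ j, j < n ∧ L[j]? = L[n]? ∧ ∀ j', j < j' → j' < n → L[j']? ≠ L[n]? := by
        obtain ⟨j, hj, hjn⟩ := h
        have hs := Nat.findGreatest_spec (P := fun j => j < n ∧ L[j]? = L[n]?)
          (m := j) (n := n) hj.le ⟨hj, hjn⟩
        refine ⟨_, hs.1, hs.2, fun j' h1 h2 h3 => ?_⟩
        exact Nat.findGreatest_is_greatest h1 h2.le ⟨h2, h3⟩
      obtain ⟨j, hj, hr⟩ := hg
      obtain ⟨c, hc1, hc2, hc3⟩ := ih j hj
      cases c with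
      | nil => simp at hc1
      | cons a t =>
        simp only [List.head?_cons, Option.some.injEq] at hc1
        subst hc1
        refine ⟨n :: a :: t, rfl, List.isChain_cons_cons.2 ⟨⟨hj, hr⟩, hc2⟩, ?_⟩
        intro l hl
        rw [List.getLast?_cons_cons] at hl
        exact hc3 l hl
    · refine ⟨[n], rfl, List.isChain_singleton _, ?_⟩
      intro l hl j hj he
      simp only [List.getLast?_singleton, Option.some.injEq] at hl
      subst hl
      exact h ⟨j, hj, he⟩

theorem predChain_mem_aux [DecidableEq κ] (L : List κ) (c : List ℕ) :
    ∀ n, IsPredChain L n c → ∀ i, i ∈ c ↔ i ≤ n ∧ L[i]? = L[n]? := by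
  induction c with
  | nil => intro n h; simp [IsPredChain] at h
  | cons a t ih =>
    rintro n ⟨h1, h2, h3⟩ i
    simp only [List.head?_cons, Option.some.injEq] at h1
    subst h1
    cases t with
    | nil =>
      have := h3 a rfl
      simp only [List.mem_singleton]
      constructor
      · rintro rfl; exact ⟨le_rfl, rfl⟩
      · rintro ⟨hi, he⟩
        by_contra hne
        exact this i (by omega) he
    | cons b t =>
      obtain ⟨⟨hb, he, hg⟩, h2⟩ := List.isChain_cons_cons.1 h2
      have := ih b ⟨rfl, h2, fun l hl => h3 l (by rw [List.getLast?_cons_cons]; exact hl)⟩ i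
      rw [List.mem_cons, this, he]
      constructor
      · rintro (rfl | ⟨h, h'⟩)
        · exact ⟨le_rfl, rfl⟩
        · exact ⟨by omega, h'⟩
      · rintro ⟨h, h'⟩
        by_cases hib : i ≤ b
        · exact Or.inr ⟨hib, h'⟩
        · left
          by_contra hne
          exact hg i (by omega) (by omega) h'

/-- Correctness of the per-key linked lists of the chained shredded representation:
if `i₀` is the largest index at which key `k` occurs in `L`, then the chain
`i₀, pred i₀, pred (pred i₀), …` (stopping when `pred` is undefined) exists, is
strictly decreasing, and visits exactly the set of all indices `i` with `L.get i = k`. -/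
theorem predChain_visits_key_positions [DecidableEq κ] (L : List κ) (k : κ) (i₀ : ℕ)
    (h₀ : L[i₀]? = some k) (hmax : ∀ i, i₀ < i → L[i]? ≠ some k) :
    (∃ c : List ℕ, IsPredChain L i₀ c) ∧
    ∀ c : List ℕ, IsPredChain L i₀ c →
      c.Chain' (· > ·) ∧ ∀ i : ℕ, i ∈ c ↔ L[i]? = some k := by
  refine ⟨predChain_exists_aux L i₀, fun c hc => ⟨?_, fun i => ?_⟩⟩
  · exact List.IsChain.imp (fun _ _ h => h.1) hc.2.1
  · rw [predChain_mem_aux L c i₀ hc i, h₀]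
    exact ⟨fun h => h.2, fun h => ⟨not_lt.1 fun hl => hmax i hl h, h⟩⟩
end

section
/- Let p : ℝ with 0 < p < 1, and let μ be the uniform probability measure on the interval (0,1) ⊆ ℝ (Lebesgue measure restricted to (0,1)). Then the pushforward of μ under the map u ↦ (⌊Real.log u / Real.log (1 − p)⌋).toNat is the geometric distribution with parameter p: for every k : ℕ, the pushforward measure of the singleton {k} equals ENNReal.ofReal (p · (1 − p)^k). -/
open MeasureTheory

/-- Correctness of `DrawGeom`: the pushforward of the uniform probability measure on the
interval `(0,1)` under `u ↦ ⌊log u / log (1 - p)⌋.toNat` is the geometric distribution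
with parameter `p`, i.e. it assigns probability `p * (1 - p)^k` to each `k : ℕ`. -/
theorem map_uniform_floor_log_eq_geometric (p : ℝ) (hp0 : 0 < p) (hp1 : p < 1) (k : ℕ) :
    (volume.restrict (Set.Ioo (0 : ℝ) 1)).map
        (fun u => (⌊Real.log u / Real.log (1 - p)⌋).toNat) {k} =
      ENNReal.ofReal (p * (1 - p) ^ k) := by
  have hq0 : 0 < 1 - p := by linarith
  have hq1 : 1 - p < 1 := by linarith
  have hlog : Real.log (1 - p) < 0 := Real.log_neg hq0 hq1
  have hm : Measurable (fun u : ℝ => (⌊Real.log u / Real.log (1 - p)⌋).toNat) :=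
    (measurable_from_top (f := Int.toNat)).comp
      (Int.measurable_floor.comp (Real.measurable_log.div_const _))
  rw [Measure.restrict_congr_set Ioo_ae_eq_Ioc, Measure.map_apply hm (measurableSet_singleton k),
    Measure.restrict_apply (hm (measurableSet_singleton k))]
  have hset : (fun u : ℝ => (⌊Real.log u / Real.log (1 - p)⌋).toNat) ⁻¹' {k} ∩ Set.Ioc 0 1
      = Set.Ioc ((1 - p) ^ (k + 1)) ((1 - p) ^ k) := by
    ext u
    have key : ∀ u : ℝ, 0 < u → u ≤ 1 → ((⌊Real.log u / Real.log (1 - p)⌋).toNat = k ↔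
        (1 - p) ^ (k + 1) < u ∧ u ≤ (1 - p) ^ k) := by
      intro u h0 h1
      have hnn : 0 ≤ ⌊Real.log u / Real.log (1 - p)⌋ :=
        Int.floor_nonneg.2 (div_nonneg_of_nonpos (Real.log_nonpos h0.le h1) hlog.le)
      have e1 : (⌊Real.log u / Real.log (1 - p)⌋).toNat = k ↔
          ⌊Real.log u / Real.log (1 - p)⌋ = (k : ℤ) := by omega
      rw [e1, Int.floor_eq_iff, le_div_iff_of_neg hlog, div_lt_iff_of_neg hlog,
        ← Real.log_lt_log_iff (pow_pos hq0 _) h0, ← Real.log_le_log_iff h0 (pow_pos hq0 _),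
        Real.log_pow, Real.log_pow]
      push_cast
      exact and_comm
    simp only [Set.mem_inter_iff, Set.mem_preimage, Set.mem_singleton_iff, Set.mem_Ioc]
    constructor
    · rintro ⟨h, h0, h1⟩
      exact (key u h0 h1).1 h
    · rintro ⟨h, h'⟩
      have h0 : 0 < u := (pow_pos hq0 _).trans h
      have h1 : u ≤ 1 := h'.trans (pow_le_one₀ hq0.le hq1.le)
      exact ⟨(key u h0 h1).2 ⟨h, h'⟩, h0, h1⟩
  rw [hset, Real.volume_Ioc]
  congr 1
  ring
end
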